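/- Let q ≥ 1, n ≥ 2q+1, and let D be a symmetric q-Kalmanson n×n real matrix. Fix a city x, and for pairwise distinct cities y_1,…,y_{2q}, all distinct from x, define f_x(y_1,…,y_{2q}) = Σ_{i=1}^{2q} d(x,y_i) − CrossMatch({y_1,…,y_{2q}}). Then f_x is minimized by the set consisting of the q cities directly preceding x and the q cities directly succeeding x in the circular arrangement 1,…,n (i.e. the cities x−q,…,x−1,x+1,…,x+q taken modulo n): the value of f_x on this set is at most the value of f_x on any other admissible 2q-tuple. -/

import Mathlib

/-- Cyclic shift: the city `p` steps after position `i` in the circular order on `Fin n`. -/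
def finShift {n : ℕ} (i : Fin n) (p : ℕ) : Fin n :=
  ⟨(i.val + p) % n, Nat.mod_lt _ i.pos⟩

/-- The `q`-stripe TSP objective: `∑_{p=1}^{q} ∑_{i=1}^{n} d(π(i), π(i+p))`,
indices taken cyclically modulo `n`. -/
noncomputable def stripeObj (q : ℕ) {n : ℕ} (D : Fin n → Fin n → ℝ)
    (π : Equiv.Perm (Fin n)) : ℝ :=
  ∑ p ∈ Finset.Icc 1 q, ∑ i : Fin n, D (π i) (π (finShift i p))

/-- The fully crossing involution on `2q+2` points: `j ↦ j + (q+1) (mod 2q+2)`. -/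
def crossShift (q : ℕ) (j : Fin (2*q+2)) : Fin (2*q+2) :=
  ⟨(j.val + (q+1)) % (2*q+2), Nat.mod_lt _ (by omega)⟩

/-- A symmetric matrix `D` is `q`-Kalmanson if for every choice of `2q+2` indices
(in increasing order, via a strictly monotone `f`), the fully crossing matching has
maximum weight among all perfect matchings of these `2q+2` indices.  Perfect
matchings are encoded as fixed-point-free involutions `σ`; each matching weight is
counted twice in the sums below (once from each endpoint), which for symmetric `D`
is equivalent to comparing matching weights. -/
def qKalmanson (q : ℕ) {n : ℕ} (D : Fin n → Fin n → ℝ) : Prop :=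
  ∀ f : Fin (2*q+2) → Fin n, StrictMono f →
    ∀ σ : Equiv.Perm (Fin (2*q+2)), (∀ j, σ (σ j) = j) → (∀ j, σ j ≠ j) →
      ∑ j : Fin (2*q+2), D (f j) (f (σ j)) ≤ ∑ j : Fin (2*q+2), D (f j) (f (crossShift q j))


/-- The weight of the fully crossing matching of `2k` cities listed in increasing
order by `g`: the sum of `d` over the `k` pairs `{g(j), g(j+k)}`, `j = 0,…,k−1`. -/
noncomputable def crossMatch (k : ℕ) {n : ℕ} (D : Fin n → Fin n → ℝ)
    (g : Fin (2*k) → Fin n) : ℝ :=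
  ∑ j : Fin k, D (g ⟨j.val, by have := j.isLt; omega⟩) (g ⟨j.val + k, by have := j.isLt; omega⟩)

lemma sum_two_mul (m : ℕ) (h : Fin (2*m) → ℝ) :
    ∑ i, h i = ∑ j : Fin m, (h ⟨j.val, by have := j.isLt; omega⟩
      + h ⟨j.val + m, by have := j.isLt; omega⟩) := by
  rw [Finset.sum_add_distrib, ← (finCongr (two_mul m).symm).sum_comp, Fin.sum_univ_add]
  congr 1
  refine Finset.sum_congr rfl fun j _ => ?_
  congr 1
  ext
  simp [add_comm]

/-- Removing a crossing pair from a fully crossing matching. -/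
lemma exists_remove (q : ℕ) {n : ℕ} (f : Fin (2*(q+1)) → Fin n) (hf : StrictMono f)
    (j0 : Fin (q+1)) (lo hi : Fin (2*(q+1))) (hlo : lo.val = j0.val)
    (hhi : hi.val = j0.val + (q+1)) :
    ∃ g : Fin (2*q) → Fin n, StrictMono g ∧
      (∀ j, j ≠ lo → j ≠ hi → ∃ i, g i = f j) ∧
      (∀ D : Fin n → Fin n → ℝ, crossMatch (q+1) D f = D (f lo) (f hi) + crossMatch q D g) ∧
      (∀ h : Fin n → ℝ, ∑ j, h (f j) = h (f lo) + h (f hi) + ∑ i, h (g i)) := by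
  have hj0 := j0.isLt
  let e : Fin (2*q) → Fin (2*(q+1)) := fun i =>
    ⟨if i.val < q then (if i.val < j0.val then i.val else i.val + 1)
      else (if i.val - q < j0.val then i.val + 1 else i.val + 2), by
        have := i.isLt
        split_ifs <;> omega⟩
  have hs : ∀ i : Fin q, (j0.succAbove i).val = if i.val < j0.val then i.val else i.val + 1 := by
    intro i
    simp only [Fin.succAbove, Fin.lt_def]
    split_ifs <;> simp_all
  have e1 : ∀ i : Fin q, e ⟨i.val, by have := i.isLt; omega⟩
      = ⟨(j0.succAbove i).val, by have := (j0.succAbove i).isLt; omega⟩ := by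
    intro i
    ext
    simp only [e, hs, i.isLt, if_true]
  have e2 : ∀ i : Fin q, e ⟨i.val + q, by have := i.isLt; omega⟩
      = ⟨(j0.succAbove i).val + (q+1), by have := (j0.succAbove i).isLt; omega⟩ := by
    intro i
    ext
    have := i.isLt
    simp only [e, hs]
    split_ifs <;> omega
  have hlo' : (⟨j0.val, by omega⟩ : Fin (2*(q+1))) = lo := Fin.ext hlo.symm
  have hhi' : (⟨j0.val + (q+1), by omega⟩ : Fin (2*(q+1))) = hi := Fin.ext hhi.symm
  refine ⟨f ∘ e, hf.comp ?_, ?_, ?_, ?_⟩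
  · intro i k hik
    rw [Fin.lt_def] at hik ⊢
    simp only [e]
    split_ifs <;> omega
  · intro j h1 h2
    have h1' : j.val ≠ j0.val := fun h => h1 (Fin.ext (h.trans hlo.symm))
    have h2' : j.val ≠ j0.val + (q+1) := fun h => h2 (Fin.ext (h.trans hhi.symm))
    have := j.isLt
    refine ⟨⟨if j.val < j0.val then j.val else if j.val < j0.val + (q+1) then j.val - 1
      else j.val - 2, by split_ifs <;> omega⟩, ?_⟩
    simp only [Function.comp]
    congr 1
    ext
    simp only [e]
    split_ifs <;> omega
  · intro D
    unfold crossMatch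
    rw [Fin.sum_univ_succAbove _ j0, hlo', hhi']
    simp only [Function.comp, e1, e2]
  · intro h
    rw [sum_two_mul (q+1), sum_two_mul q, Fin.sum_univ_succAbove _ j0, hlo', hhi']
    simp only [Function.comp, e1, e2]

/-- Inserting two points. -/
lemma exists_insert (q : ℕ) {n : ℕ} (g : Fin (2*q) → Fin n) (hg : StrictMono g)
    (x z : Fin n) (hxz : x ≠ z) (hx : ∀ i, g i ≠ x) (hz : ∀ i, g i ≠ z) :
    ∃ f : Fin (2*(q+1)) → Fin n, StrictMono f ∧
      (∃ a, f a = x) ∧ (∃ c, f c = z) ∧ (∀ i, ∃ j, f j = g i) ∧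
      (∀ h : Fin n → ℝ, ∑ j, h (f j) = h x + h z + ∑ i, h (g i)) ∧
      (∀ D : Fin n → Fin n → ℝ, (∀ i j, D i j = D j i) → qKalmanson q D →
        D x z + crossMatch q D g ≤ crossMatch (q+1) D f) := by
  classical
  let S : Finset (Fin n) := insert x (insert z (Finset.univ.image g))
  have hS : S.card = 2*(q+1) := by
    rw [Finset.card_insert_of_notMem, Finset.card_insert_of_notMem,
      Finset.card_image_of_injective _ hg.injective]
    · simp; omega
    · simp [hz]
    · simp [hx, hxz]
  let f := S.orderEmbOfFin hS
  have hfm : ∀ y, y ∈ S → ∃ j, f j = y := by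
    intro y hy
    have : y ∈ Set.range f := by
      rw [Finset.range_orderEmbOfFin]; exact hy
    exact this
  let p : Option (Fin q) × Bool → Fin n := fun s => match s with
    | (none, false) => x
    | (none, true) => z
    | (some j, false) => g ⟨j.val, by have := j.isLt; omega⟩
    | (some j, true) => g ⟨j.val + q, by have := j.isLt; omega⟩
  have hpS : ∀ s, p s ∈ S := by
    rintro ⟨_ | j, _ | _⟩ <;> simp [p, S]
  have hpi : Function.Injective p := by
    rintro ⟨_ | j, _ | _⟩ ⟨_ | k, _ | _⟩ h <;>
      simp [p, hxz, hxz.symm, hx, hz, (hx _).symm, (hz _).symm, hg.injective.eq_iff] at h ⊢ <;>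
      omega
  choose E0 hE0 using fun s => hfm (p s) (hpS s)
  have hE0i : Function.Injective E0 := by
    intro s t h
    apply hpi
    rw [← hE0, ← hE0, h]
  have hb : Function.Bijective E0 := by
    rw [Fintype.bijective_iff_injective_and_card]
    refine ⟨hE0i, ?_⟩
    simp; omega
  let E := Equiv.ofBijective E0 hb
  have hE : ∀ s, f (E s) = p s := hE0
  refine ⟨f, f.strictMono, hfm x (by simp [S]), hfm z (by simp [S]), fun i => hfm _ (by simp [S]),
    ?_, ?_⟩
  · intro h
    rw [← E.sum_comp, sum_two_mul, Fintype.sum_prod_type, Fintype.sum_option]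
    simp only [hE, Fintype.sum_bool, p]
    rw [add_comm (h z)]
    congr 1
    exact Finset.sum_congr rfl fun _ _ => add_comm _ _
  · intro D hsymm hK
    let τ : Equiv.Perm (Option (Fin q) × Bool) := Equiv.prodCongr (Equiv.refl _) Equiv.boolNot
    let σ : Equiv.Perm (Fin (2*q+2)) := (E.symm.trans τ).trans E
    have hτ : ∀ s, τ (τ s) = s := by rintro ⟨o, b⟩; simp [τ]
    have hτ' : ∀ s, τ s ≠ s := by rintro ⟨o, _ | _⟩ <;> simp [τ]
    have key := hK f f.strictMono σ (fun j => by simp [σ, hτ])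
      (fun j => by
        intro h
        apply hτ' (E.symm j)
        simpa [σ] using congrArg E.symm h)
    have h1 : ∑ j, D (f j) (f (σ j)) = 2 * (D x z + crossMatch q D g) := by
      rw [← Equiv.sum_comp E, Fintype.sum_prod_type, Fintype.sum_option]
      have : ∀ s, f (σ (E s)) = p (τ s) := by
        intro s; rw [← hE]; simp [σ]
      simp only [this, hE, Fintype.sum_bool]
      simp only [τ, p, Equiv.prodCongr_apply, Prod.map, Equiv.boolNot_apply, Equiv.refl_apply,
        Bool.not_true, Bool.not_false]
      unfold crossMatch
      rw [mul_add, Finset.mul_sum, hsymm z x]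
      congr 1
      · ring
      · refine Finset.sum_congr rfl fun j _ => ?_
        rw [hsymm (g ⟨j.val + q, _⟩)]
        ring
    have h2 : ∑ j, D (f j) (f (crossShift q j)) = 2 * crossMatch (q+1) D f := by
      refine (sum_two_mul (q+1) (fun j => D (f j) (f (crossShift q j)))).trans ?_
      unfold crossMatch
      rw [Finset.mul_sum]
      refine Finset.sum_congr rfl fun j _ => ?_
      have hj := j.isLt
      have c1 : crossShift q ⟨j.val, by omega⟩ = ⟨j.val + (q+1), by omega⟩ := by
        ext; simp only [crossShift]; rw [Nat.mod_eq_of_lt (by omega)]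
      have c2 : crossShift q ⟨j.val + (q+1), by omega⟩ = ⟨j.val, by omega⟩ := by
        ext; simp only [crossShift]
        rw [show j.val + (q+1) + (q+1) = j.val + (2*q+2) by ring, Nat.add_mod_right,
          Nat.mod_eq_of_lt (by omega)]
      rw [c1, c2, hsymm (f ⟨j.val + (q+1), _⟩)]
      ring
    have key2 : 2 * (D x z + crossMatch q D g) ≤ 2 * crossMatch (q+1) D f :=
      h1.symm.le.trans (le_trans key h2.le)
    linarith

lemma strictMono_gap {m n : ℕ} (f : Fin m → Fin n) (hf : StrictMono f) :
    ∀ (d : ℕ) (i j : Fin m), j.val = i.val + d → (f i).val + d ≤ (f j).val := by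
  intro d
  induction d with
  | zero => intro i j h; rw [show j = i from Fin.ext h]; simp
  | succ d ih =>
    intro i j h
    have hj := j.isLt
    have h1 := ih i ⟨i.val + d, by omega⟩ rfl
    have h2 : f ⟨i.val + d, by omega⟩ < f j := hf (by rw [Fin.lt_def]; simp; omega)
    rw [Fin.lt_def] at h2
    omega

lemma shift_cases {n : ℕ} (x y : Fin n) (t : ℕ) (h1 : 1 ≤ t) (h2 : t < n)
    (h : y = finShift x t ∨ y = finShift x (n - t)) :
    y.val = x.val + t ∨ y.val + n = x.val + t ∨ y.val + t = x.val ∨ y.val + t = x.val + n := by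
  have hx := x.isLt
  have aux : ∀ s, s < n → ((x.val + s) % n = x.val + s ∨ (x.val + s) % n + n = x.val + s) := by
    intro s hs
    by_cases h : x.val + s < n
    · left; exact Nat.mod_eq_of_lt h
    · right
      rw [Nat.mod_eq_sub_mod (by omega), Nat.mod_eq_of_lt (by omega)]
      omega
  rcases h with h | h
  · have := aux t h2
    have hv : y.val = (x.val + t) % n := by rw [h]; rfl
    omega
  · have := aux (n - t) (by omega)
    have hv : y.val = (x.val + (n - t)) % n := by rw [h]; rfl
    omega

/-- The antipode of `x` among `2q+2` points is not a near neighbour of `x`. -/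
lemma far (q : ℕ) {n : ℕ} (f : Fin (2*(q+1)) → Fin n) (hf : StrictMono f)
    (lo hi : Fin (2*(q+1))) (hh : hi.val = lo.val + (q+1)) :
    (f lo).val + q + 1 ≤ (f hi).val ∧ (f hi).val + q + 1 ≤ (f lo).val + n := by
  have hl := hi.isLt
  have g1 := strictMono_gap f hf (q+1) lo hi hh
  have g2 := strictMono_gap f hf lo.val ⟨0, by omega⟩ lo (by simp)
  have g3 := strictMono_gap f hf (2*q+1 - hi.val) hi ⟨2*q+1, by omega⟩ (by simp; omega)
  have := (f ⟨2*q+1, by omega⟩).isLt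
  omega

lemma step (q n : ℕ) (D : Fin n → Fin n → ℝ) (hsymm : ∀ i j, D i j = D j i)
    (hK : qKalmanson q D) (x z : Fin n) (g : Fin (2*q) → Fin n) (hg : StrictMono g)
    (hgx : ∀ i, g i ≠ x) (hgz : ∀ i, g i ≠ z) (hxz : x ≠ z)
    (T : Fin n → Prop) (hTz : T z)
    (hT : ∀ y, T y → ∃ t : ℕ, 1 ≤ t ∧ t ≤ q ∧ (y = finShift x t ∨ y = finShift x (n - t))) :
    ∃ g' : Fin (2*q) → Fin n, StrictMono g' ∧ (∀ i, g' i ≠ x) ∧ (∃ i, g' i = z) ∧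
      (∀ i, T (g i) → ∃ k, g' k = g i) ∧
      (∑ i, D x (g' i)) - crossMatch q D g' ≤ (∑ i, D x (g i)) - crossMatch q D g := by
  obtain ⟨f, hf, ⟨a, ha⟩, ⟨c, hc⟩, hfg, hsum, hle⟩ := exists_insert q g hg x z hxz hgx hgz
  have hle := hle D hsymm hK
  have hal := a.isLt
  obtain ⟨j0, lo, hi, hlo, hhi, hab⟩ : ∃ (j0 : Fin (q+1)) (lo hi : Fin (2*(q+1))),
      lo.val = j0.val ∧ hi.val = j0.val + (q+1) ∧ (a = lo ∨ a = hi) := by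
    by_cases h : a.val < q + 1
    · exact ⟨⟨a.val, h⟩, a, ⟨a.val + (q+1), by omega⟩, rfl, rfl, Or.inl rfl⟩
    · exact ⟨⟨a.val - (q+1), by omega⟩, ⟨a.val - (q+1), by omega⟩, a, rfl, by simp; omega,
        Or.inr rfl⟩
  obtain ⟨g', hg', hr, hcm, hs⟩ := exists_remove q f hf j0 lo hi hlo hhi
  have hfar := far q f hf lo hi (by omega)
  obtain ⟨b, hb, hr, hcm, hs, hba⟩ : ∃ b, ¬ T (f b) ∧ (∀ j, j ≠ a → j ≠ b → ∃ i, g' i = f j) ∧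
      crossMatch (q+1) D f = D x (f b) + crossMatch q D g' ∧
      (∀ h : Fin n → ℝ, ∑ j, h (f j) = h x + h (f b) + ∑ i, h (g' i)) ∧ True := by
    rcases hab with h | h
    · subst h
      refine ⟨hi, ?_, hr, ?_, ?_, trivial⟩
      · intro hTT
        obtain ⟨t, h1, h2, h3⟩ := hT _ hTT
        have := (f hi).isLt
        have := shift_cases x (f hi) t h1 (by omega) h3
        rw [← ha] at this
        omega
      · rw [hcm, ha]
      · intro h; rw [hs, ha]
    · subst h
      refine ⟨lo, ?_, fun j h1 h2 => hr j h2 h1, ?_, ?_, trivial⟩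
      · intro hTT
        obtain ⟨t, h1, h2, h3⟩ := hT _ hTT
        have := (f a).isLt
        have := shift_cases x (f lo) t h1 (by omega) h3
        rw [← ha] at this
        omega
      · rw [hcm, ha, hsymm]
      · intro h; rw [hs, ha]; ring
  have hin : ∀ j, j ≠ a → T (f j) → ∃ i, g' i = f j := by
    intro j hj hTj
    exact hr j hj (fun h => hb (h ▸ hTj))
  refine ⟨g', hg', ?_, ?_, ?_, ?_⟩
  · intro i hi
    classical
    have h1 := hs (fun y => if y = x then 1 else 0)
    have h2 : ∑ j, (if f j = x then (1:ℝ) else 0) = 1 := by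
      rw [Finset.sum_eq_single a]
      · simp [ha]
      · intro j _ hj
        rw [if_neg]
        rw [← ha]
        exact fun h => hj (hf.injective h)
      · simp
    have h3 : (1:ℝ) ≤ ∑ i, (if g' i = x then (1:ℝ) else 0) := by
      have := Finset.single_le_sum (f := fun i => if g' i = x then (1:ℝ) else 0)
        (fun i _ => by positivity) (Finset.mem_univ i)
      simpa [hi] using this
    have h4 : (0:ℝ) ≤ if f b = x then (1:ℝ) else 0 := by positivity
    simp only [h2, if_true] at h1
    linarith
  · rw [← hc]
    refine hin c ?_ (hc ▸ hTz)
    intro h; subst h; exact hxz (ha.symm.trans hc)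
  · intro i hi
    obtain ⟨j, hj⟩ := hfg i
    rw [← hj]
    refine hin j ?_ (hj ▸ hi)
    intro h; subst h; exact hgx i (hj.symm.trans ha)
  · have h1 := hs (D x)
    have h2 := hsum (D x)
    linarith

theorem fx_minimized_by_cyclic_neighbours
    (q n : ℕ) (hq : 1 ≤ q) (hn : 2*q+1 ≤ n)
    (D : Fin n → Fin n → ℝ) (hsymm : ∀ i j, D i j = D j i)
    (hK : qKalmanson q D) (x : Fin n)
    (g₀ : Fin (2*q) → Fin n) (hg₀ : StrictMono g₀)
    (hrange : ∀ y : Fin n, (∃ i, g₀ i = y) ↔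
      ∃ t : ℕ, 1 ≤ t ∧ t ≤ q ∧ (y = finShift x t ∨ y = finShift x (n - t)))
    (g : Fin (2*q) → Fin n) (hg : StrictMono g) (hgx : ∀ i, g i ≠ x) :
    (∑ i : Fin (2*q), D x (g₀ i)) - crossMatch q D g₀ ≤
      (∑ i : Fin (2*q), D x (g i)) - crossMatch q D g := by
  classical
  induction hN : (Finset.univ.image g₀ \ Finset.univ.image g).card using Nat.strong_induction_on
    generalizing g with
  | _ N ih =>
    by_cases hsub : Finset.univ.image g₀ ⊆ Finset.univ.image g
    · have heq : Finset.univ.image g₀ = Finset.univ.image g := by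
        apply Finset.eq_of_subset_of_card_le hsub
        rw [Finset.card_image_of_injective _ hg.injective,
          Finset.card_image_of_injective _ hg₀.injective]
      have hr : Set.range g₀ = Set.range g := by
        have := congrArg (fun s : Finset (Fin n) => (s : Set (Fin n))) heq
        simpa using this
      have : g₀ = g := (StrictMono.range_inj hg₀ hg).1 hr
      rw [this]
    · obtain ⟨z, hz, hzg⟩ := Finset.not_subset.1 hsub
      have hz0 : ∃ i, g₀ i = z := by simpa using hz
      have hzg' : ∀ i, g i ≠ z := by simpa using hzg
      have hxz : x ≠ z := by
        obtain ⟨t, h1, h2, h3⟩ := (hrange z).1 hz0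
        have := shift_cases x z t h1 (by omega) h3
        intro h
        subst h
        omega
      obtain ⟨g', hg', hgx', ⟨k, hk⟩, hT, hle⟩ := step q n D hsymm hK x z g hg hgx hzg' hxz
        (fun y => ∃ i, g₀ i = y) hz0 (fun y hy => (hrange y).1 hy)
      refine le_trans (ih _ ?_ g' hg' hgx' rfl) hle
      rw [← hN]
      apply Finset.card_lt_card
      rw [Finset.ssubset_iff_of_subset]
      · refine ⟨z, Finset.mem_sdiff.2 ⟨hz, hzg⟩, ?_⟩
        intro h
        exact (Finset.mem_sdiff.1 h).2 (Finset.mem_image.2 ⟨k, Finset.mem_univ _, hk⟩)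
      · intro y hy
        rw [Finset.mem_sdiff] at hy ⊢
        refine ⟨hy.1, fun h => hy.2 ?_⟩
        obtain ⟨i, -, hi⟩ := Finset.mem_image.1 h
        have hy0 : ∃ i, g₀ i = y := by simpa using hy.1
        obtain ⟨k', hk'⟩ := hT i (hi ▸ hy0)
        exact Finset.mem_image.2 ⟨k', Finset.mem_univ _, hk'.trans hi⟩
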